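/- The bidding game has a unique Nash equilibrium: given an upper bound ᾱ > 0, there exists a unique vector α* ∈ [0, ᾱ]^N such that for every supplier i and every t ∈ [0, ᾱ], φ_i(α*) ≥ φ_i(α*[i := t]), where α*[i := t] denotes α* with its i-th coordinate replaced by t. -/

import Mathlib

/-!
The price `R` moves with the bid `α i` at rate `k i = (1 / β i) / ∑ l, 1 / β l`, and with
`c i = θ1 i + θ2 i * ξ` the profit equals `((R - c i) ^ 2 - (α i - c i) ^ 2) / (2 * β i)`. It is
thus a concave quadratic in the own bid, so an equilibrium is a bid vector whose `i`-th coordinate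
is the projection of `k i * R + (1 - k i) * c i` onto the strategy set, for every `i`.
Projections are nonexpansive, hence the best responses to a price `r` clear the market at a price
that depends on `r` with Lipschitz constant `∑ i, k i ^ 2`. With two or more suppliers this is less
than `∑ i, k i = 1`, and equilibria correspond to the fixed point of a contraction of `ℝ`.
-/

open Function RealInnerProductSpace

section Projection

variable {E : Type*} [NormedAddCommGroup E] [InnerProductSpace ℝ E] {K : Set E} {x y p q : E}

/-- `p` is the metric projection of `x` onto the convex set `K`, expressed by the variational
inequality that characterizes it. -/
def IsProjOn (K : Set E) (x p : E) : Prop :=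
  p ∈ K ∧ ∀ z ∈ K, ⟪x - p, z - p⟫ ≤ 0

theorem exists_isProjOn (hne : K.Nonempty) (hcomplete : IsComplete K) (hconvex : Convex ℝ K)
    (x : E) : ∃ p, IsProjOn K x p := by
  obtain ⟨p, hp, hmin⟩ := exists_norm_eq_iInf_of_complete_convex hne hcomplete hconvex x
  exact ⟨p, hp, (norm_eq_iInf_iff_real_inner_le_zero hconvex hp).1 hmin⟩

theorem IsProjOn.norm_sub_le (hp : IsProjOn K x p) (hq : IsProjOn K y q) :
    ‖p - q‖ ≤ ‖x - y‖ := by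
  have hsq : ‖p - q‖ * ‖p - q‖ ≤ ‖x - y‖ * ‖p - q‖ := calc
    ‖p - q‖ * ‖p - q‖ = ⟪x - y, p - q⟫ + ⟪x - p, q - p⟫ + ⟪y - q, p - q⟫ := by
      rw [← real_inner_self_eq_norm_mul_norm, ← neg_sub p q, inner_neg_right, ← sub_eq_add_neg,
        ← inner_sub_left, ← inner_add_left]
      congr 1
      abel
    _ ≤ ⟪x - y, p - q⟫ := by linarith [hp.2 q hq.1, hq.2 p hp.1]
    _ ≤ ‖x - y‖ * ‖p - q‖ := real_inner_le_norm _ _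
  rcases (norm_nonneg (p - q)).eq_or_lt with hzero | hpos
  · exact hzero ▸ norm_nonneg _
  · exact le_of_mul_le_mul_right hsq hpos

theorem IsProjOn.unique (hp : IsProjOn K x p) (hq : IsProjOn K x q) : p = q := by
  simpa [sub_eq_zero] using hp.norm_sub_le hq

/-- A quadratic penalty does not affect the first-order condition: along the segment from `p` to
`z` it vanishes to second order at `p`. -/
theorem isProjOn_iff_forall_inner_le_mul_sq (hconvex : Convex ℝ K) {b : ℝ} (hb : 0 ≤ b) :
    IsProjOn K x p ↔ p ∈ K ∧ ∀ z ∈ K, ⟪x - p, z - p⟫ ≤ b * ‖z - p‖ ^ 2 := by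
  refine and_congr_right fun hp => ⟨fun h z hz => (h z hz).trans (by positivity), fun h z hz => ?_⟩
  have hsegment : ∀ s ∈ Set.Ioc (0 : ℝ) 1, ⟪x - p, z - p⟫ ≤ s * (b * ‖z - p‖ ^ 2) := by
    intro s hs
    have hle := h _ (hconvex.add_smul_sub_mem hp hz (Set.Ioc_subset_Icc_self hs))
    rw [add_sub_cancel_left, inner_smul_right, norm_smul, Real.norm_of_nonneg hs.1.le] at hle
    exact le_of_mul_le_mul_left (by linarith) hs.1
  have hlim : Filter.Tendsto (fun s : ℝ => s * (b * ‖z - p‖ ^ 2)) (nhdsWithin 0 (Set.Ioi 0))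
      (nhds 0) :=
    ((continuous_mul_const _).tendsto' 0 0 (zero_mul _)).mono_left nhdsWithin_le_nhds
  exact ge_of_tendsto hlim <|
    Filter.eventually_of_mem (Ioc_mem_nhdsGT zero_lt_one) hsegment

end Projection

/-- Nash equilibrium in pure strategies of the game in which player `i` has payoff `u i` and
strategy set `K i`. -/
def IsNashEquilibrium {ι S : Type*} [DecidableEq ι] (K : ι → Set S) (u : ι → (ι → S) → ℝ)
    (α : ι → S) : Prop :=
  (∀ i, α i ∈ K i) ∧ ∀ i, ∀ t ∈ K i, u i (update α i t) ≤ u i α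

section Market

variable {ι : Type*} [Fintype ι]

/-- The market clearing price `R(α)`. -/
noncomputable def clearingPrice (β : ι → ℝ) (Q : ℝ) (α : ι → ℝ) : ℝ :=
  (Q + ∑ l, α l / β l) / ∑ l, 1 / β l

/-- The dispatch `P_i(α)`. -/
noncomputable def dispatch (β : ι → ℝ) (Q : ℝ) (α : ι → ℝ) (i : ι) : ℝ :=
  (clearingPrice β Q α - α i) / β i

/-- The profit `φ_i(α)`, with `c i` standing for the linear cost coefficient `θ_{i1} + θ_{i2} ξ`. -/
noncomputable def profit (β : ι → ℝ) (Q : ℝ) (c : ι → ℝ) (i : ι) (α : ι → ℝ) : ℝ :=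
  (clearingPrice β Q α - c i) * dispatch β Q α i - β i / 2 * dispatch β Q α i ^ 2

/-- The rate at which the clearing price responds to the bid of supplier `i`. -/
noncomputable def priceWeight (β : ι → ℝ) (i : ι) : ℝ :=
  1 / β i / ∑ l, 1 / β l

/-- The bid that an unconstrained supplier `i` aims for at price `r`: the zero of the derivative of
its profit in its own bid, with the price in that derivative frozen at `r`. -/
noncomputable def targetBid (β c : ι → ℝ) (i : ι) (r : ℝ) : ℝ :=
  priceWeight β i * r + (1 - priceWeight β i) * c i

variable {β : ι → ℝ}

theorem priceWeight_pos (hβ : ∀ i, 0 < β i) (i : ι) : 0 < priceWeight β i :=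
  div_pos (one_div_pos.2 (hβ i))
    (Finset.sum_pos (fun l _ => one_div_pos.2 (hβ l)) ⟨i, Finset.mem_univ i⟩)

theorem sum_priceWeight [Nonempty ι] (hβ : ∀ i, 0 < β i) : ∑ i, priceWeight β i = 1 := by
  have hsum : 0 < ∑ l, 1 / β l :=
    Finset.sum_pos (fun l _ => one_div_pos.2 (hβ l)) Finset.univ_nonempty
  simp only [priceWeight, ← Finset.sum_div, div_self hsum.ne']

theorem priceWeight_le_one (hβ : ∀ i, 0 < β i) (i : ι) : priceWeight β i ≤ 1 := by
  have : Nonempty ι := ⟨i⟩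
  rw [← sum_priceWeight hβ]
  exact Finset.single_le_sum (fun l _ => (priceWeight_pos hβ l).le) (Finset.mem_univ i)

theorem priceWeight_lt_one [Nontrivial ι] (hβ : ∀ i, 0 < β i) (i : ι) : priceWeight β i < 1 := by
  obtain ⟨j, hji⟩ := exists_ne i
  rw [← sum_priceWeight hβ]
  exact Finset.single_lt_sum hji (Finset.mem_univ i) (Finset.mem_univ j) (priceWeight_pos hβ j)
    fun l _ _ => (priceWeight_pos hβ l).le

theorem sum_priceWeight_sq_lt_one [Nontrivial ι] (hβ : ∀ i, 0 < β i) :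
    ∑ i, priceWeight β i ^ 2 < 1 := by
  rw [← sum_priceWeight hβ]
  exact Finset.sum_lt_sum_of_nonempty Finset.univ_nonempty fun i _ =>
    pow_lt_self_of_lt_one₀ (priceWeight_pos hβ i) (priceWeight_lt_one hβ i) one_lt_two

theorem clearingPrice_sub (Q : ℝ) (α α' : ι → ℝ) :
    clearingPrice β Q α - clearingPrice β Q α' = ∑ l, priceWeight β l * (α l - α' l) := by
  rw [clearingPrice, clearingPrice, ← sub_div, add_sub_add_left_eq_sub, ← Finset.sum_sub_distrib,
    Finset.sum_div]
  refine Finset.sum_congr rfl fun l _ => ?_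
  rw [priceWeight]
  ring

theorem clearingPrice_update [DecidableEq ι] (Q : ℝ) (α : ι → ℝ) (i : ι) (t : ℝ) :
    clearingPrice β Q (update α i t) = clearingPrice β Q α + priceWeight β i * (t - α i) := by
  rw [← sub_eq_iff_eq_add', clearingPrice_sub, Finset.sum_eq_single_of_mem i (Finset.mem_univ i)]
  · rw [update_self]
  · intro l _ hl
    rw [update_of_ne hl, sub_self, mul_zero]

theorem profit_eq_sq_sub_sq (Q : ℝ) (c : ι → ℝ) {i : ι} (hi : β i ≠ 0) (α : ι → ℝ) :
    profit β Q c i α = ((clearingPrice β Q α - c i) ^ 2 - (α i - c i) ^ 2) / (2 * β i) := by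
  rw [profit, dispatch]
  field_simp
  ring

theorem profit_update_sub_profit [DecidableEq ι] (Q : ℝ) (c : ι → ℝ) {i : ι} (hi : β i ≠ 0)
    (α : ι → ℝ) (t : ℝ) :
    profit β Q c i (update α i t) - profit β Q c i α =
      ((targetBid β c i (clearingPrice β Q α) - α i) * (t - α i)
        - (1 - priceWeight β i ^ 2) / 2 * (t - α i) ^ 2) / β i := by
  rw [profit_eq_sq_sub_sq Q c hi, profit_eq_sq_sub_sq Q c hi, clearingPrice_update, update_self,
    targetBid]
  field_simp
  ring

theorem isNashEquilibrium_profit_iff [DecidableEq ι] (hβ : ∀ i, 0 < β i) (Q : ℝ)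
    (c : ι → ℝ) {K : ι → Set ℝ} (hconvex : ∀ i, Convex ℝ (K i)) (α : ι → ℝ) :
    IsNashEquilibrium K (profit β Q c) α ↔
      ∀ i, IsProjOn (K i) (targetBid β c i (clearingPrice β Q α)) (α i) := by
  rw [IsNashEquilibrium, ← forall_and]
  refine forall_congr' fun i => ?_
  have hcurvature : 0 ≤ (1 - priceWeight β i ^ 2) / 2 :=
    div_nonneg (sub_nonneg.2 (pow_le_one₀ (priceWeight_pos hβ i).le (priceWeight_le_one hβ i)))
      zero_le_two
  rw [isProjOn_iff_forall_inner_le_mul_sq (hconvex i) hcurvature]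
  refine and_congr_right fun _ => forall₂_congr fun t _ => ?_
  rw [← sub_nonpos, profit_update_sub_profit Q c (hβ i).ne', div_le_iff₀ (hβ i), zero_mul,
    sub_nonpos, Real.inner_apply, Real.norm_eq_abs, sq_abs]

theorem contractingWith_clearingPrice_comp [Nontrivial ι] (hβ : ∀ i, 0 < β i) (Q : ℝ)
    {A : ℝ → ι → ℝ} (hA : ∀ r s i, |A r i - A s i| ≤ priceWeight β i * |r - s|) :
    ContractingWith (∑ i, priceWeight β i ^ 2).toNNReal fun r => clearingPrice β Q (A r) := by
  refine ⟨Real.toNNReal_lt_one.2 (sum_priceWeight_sq_lt_one hβ),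
    LipschitzWith.of_dist_le' fun r s => ?_⟩
  calc |clearingPrice β Q (A r) - clearingPrice β Q (A s)|
      ≤ ∑ i, |priceWeight β i * (A r i - A s i)| := by
        rw [clearingPrice_sub]
        exact Finset.abs_sum_le_sum_abs _ _
    _ ≤ ∑ i, priceWeight β i ^ 2 * |r - s| := by
        refine Finset.sum_le_sum fun i _ => ?_
        have hk := (priceWeight_pos hβ i).le
        rw [abs_mul, abs_of_nonneg hk, sq, mul_assoc]
        exact mul_le_mul_of_nonneg_left (hA r s i) hk
    _ = (∑ i, priceWeight β i ^ 2) * |r - s| := (Finset.sum_mul ..).symm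

theorem IsProjOn.abs_sub_le_priceWeight_mul (hβ : ∀ i, 0 < β i) {c : ι → ℝ} {i : ι} {K : Set ℝ}
    {r s p q : ℝ} (hp : IsProjOn K (targetBid β c i r) p) (hq : IsProjOn K (targetBid β c i s) q) :
    |p - q| ≤ priceWeight β i * |r - s| := by
  have hle := hp.norm_sub_le hq
  rwa [targetBid, targetBid, add_sub_add_right_eq_sub, ← mul_sub, norm_mul,
    Real.norm_of_nonneg (priceWeight_pos hβ i).le] at hle

theorem nash_equilibrium_exists_unique_general [Nontrivial ι] [DecidableEq ι]
    (hβ : ∀ i, 0 < β i) (Q : ℝ) (c : ι → ℝ) {K : ι → Set ℝ} (hne : ∀ i, (K i).Nonempty)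
    (hclosed : ∀ i, IsClosed (K i)) (hconvex : ∀ i, Convex ℝ (K i)) :
    ∃! α, IsNashEquilibrium K (profit β Q c) α := by
  choose A hA using fun (r : ℝ) (i : ι) =>
    exists_isProjOn (hne i) (hclosed i).isComplete (hconvex i) (targetBid β c i r)
  have hcontr := contractingWith_clearingPrice_comp hβ Q fun r s i =>
    (hA r i).abs_sub_le_priceWeight_mul hβ (hA s i)
  have hfixed : clearingPrice β Q (A hcontr.fixedPoint) = hcontr.fixedPoint :=
    hcontr.fixedPoint_isFixedPt
  simp only [isNashEquilibrium_profit_iff hβ Q c hconvex]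
  refine ⟨A hcontr.fixedPoint, fun i => by rw [hfixed]; exact hA _ i, fun α hα => ?_⟩
  have hα_eq : α = A (clearingPrice β Q α) := funext fun i => (hα i).unique (hA _ i)
  have hprice : clearingPrice β Q α = hcontr.fixedPoint :=
    hcontr.fixedPoint_unique (congrArg (clearingPrice β Q) hα_eq.symm)
  rwa [hprice] at hα_eq

end Market

/-- **Existence and uniqueness of the Nash equilibrium of the bidding game.** -/
theorem nash_equilibrium_exists_unique
    (N : ℕ) (hN : 2 ≤ N) (β : Fin N → ℝ) (hβ : ∀ i, 0 < β i)
    (Q ξ : ℝ) (θ1 θ2 : Fin N → ℝ)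
    (ᾱ : ℝ) (hᾱ : 0 < ᾱ)
    (S : ℝ) (hS : S = ∑ l, 1 / β l)
    (R : (Fin N → ℝ) → ℝ)
    (hR : ∀ α, R α = (Q + ∑ l, α l / β l) / S)
    (P : (Fin N → ℝ) → Fin N → ℝ)
    (hP : ∀ α i, P α i = (R α - α i) / β i)
    (φ : Fin N → (Fin N → ℝ) → ℝ)
    (hφ : ∀ i α, φ i α
      = (R α - (θ1 i + θ2 i * ξ)) * P α i - β i / 2 * (P α i) ^ 2) :
    ∃! αstar : Fin N → ℝ,
      (∀ i, αstar i ∈ Set.Icc (0 : ℝ) ᾱ) ∧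
      (∀ i, ∀ t ∈ Set.Icc (0 : ℝ) ᾱ,
        φ i (Function.update αstar i t) ≤ φ i αstar) := by
  have : Nontrivial (Fin N) := Fin.nontrivial_iff_two_le.2 hN
  obtain rfl : R = clearingPrice β Q := funext fun α => by rw [hR, hS, clearingPrice]
  obtain rfl : P = dispatch β Q := funext₂ hP
  obtain rfl : φ = profit β Q fun i => θ1 i + θ2 i * ξ := funext₂ hφ
  exact nash_equilibrium_exists_unique_general hβ Q _ (fun _ => Set.nonempty_Icc.2 hᾱ.le)
    (fun _ => isClosed_Icc) fun _ => convex_Icc 0 ᾱ
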